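/- arXiv:math/0509348 — 2 statements merged into one kernel-verified Lean document; each statement's English description precedes it below -/
import Mathlib

section
/- The curvature of the basic instanton is F = (1/(1+|q|²))² · Im(dq ∧ dconj(q)); in components: if A_μ(q) = Im(q · conj(e_μ))/(1 + |q|²), then for all μ, ν and every q ∈ ℍ, F_{μν}(q) = ∂_μA_ν − ∂_νA_μ + [A_μ, A_ν] = (1/(1+|q|²))² · Im(e_μ · conj(e_ν) − e_ν · conj(e_μ)). -/
/-- The standard quaternion basis `e₁ = 1, e₂ = 𝐢, e₃ = 𝐣, e₄ = 𝐤`, identifying `ℝ⁴ ≅ ℍ`. -/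
noncomputable def qe : Fin 4 → Quaternion ℝ
  | 0 => 1
  | 1 => ⟨0, 1, 0, 0⟩
  | 2 => ⟨0, 0, 1, 0⟩
  | 3 => ⟨0, 0, 0, 1⟩

/-- The imaginary part `Im p = (p − conj p)/2` of a quaternion. -/
noncomputable def qIm (p : Quaternion ℝ) : Quaternion ℝ := (p - star p) / 2

/-- The components `A_μ(q) = Im(q · conj(e_μ))/(1 + |q|²)` of the basic instanton on `ℝ⁴ ≅ ℍ`. -/
noncomputable def basicInstanton (μ : Fin 4) (q : Quaternion ℝ) : Quaternion ℝ :=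
  (1 + ‖q‖ ^ 2)⁻¹ • qIm (q * star (qe μ))

/-- The curvature components `F_{μν} = ∂_μA_ν − ∂_νA_μ + [A_μ, A_ν]` of a connection on
`ℝ⁴ ≅ ℍ` with imaginary-quaternion (su(2)) values. -/
noncomputable def qCurv (A : Fin 4 → Quaternion ℝ → Quaternion ℝ) (μ ν : Fin 4)
    (q : Quaternion ℝ) : Quaternion ℝ :=
  fderiv ℝ (A ν) q (qe μ) - fderiv ℝ (A μ) q (qe ν) + (A μ q * A ν q - A ν q * A μ q)

/-!
For tangent vectors `a`, `b` at `q`, write `u = q * star a` and `w = q * star b`. The derivative of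
the factor `(1 + ‖q‖²)⁻¹` contributes a multiple of `2 (re u) (im w) - 2 (re w) (im u)`, because
`re u` is the inner product of `q` and `a`. Substituting `star u = 2 re u - u` shows that this
expression minus the commutator of `u` and `w` is `star u * w - star w * u`, in which
`star q * q = ‖q‖²` can be pulled out to leave `‖q‖² (a * star b - b * star a)`. The curvature is
therefore `(1 + ‖q‖²)⁻¹ - ‖q‖² (1 + ‖q‖²)⁻² = (1 + ‖q‖²)⁻²` times `a * star b - b * star a`.
-/

open scoped Quaternion

section QuaternionAlgebraIdentities

variable {R : Type*} [CommRing R]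

theorem quaternion_im_sub_star_self (p : ℍ[R]) : (p - star p).im = p - star p := by
  ext <;> simp

theorem quaternion_lie_im_im (u w : ℍ[R]) : ⁅u.im, w.im⁆ = ⁅u, w⁆ := by
  rw [Ring.lie_def, Ring.lie_def]
  ext <;> simp <;> ring

theorem quaternion_star_mul_sub_star_mul (u w : ℍ[R]) :
    star u * w - star w * u = (2 * u.re) • w.im - (2 * w.re) • u.im - ⁅u.im, w.im⁆ := by
  have re_parts_cancel :
      (2 * u.re) • w - (2 * w.re) • u = (2 * u.re) • w.im - (2 * w.re) • u.im := by
    ext <;> simp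
    ring
  rw [quaternion_lie_im_im, ← re_parts_cancel, Ring.lie_def, Quaternion.star_eq_two_re_sub u,
    Quaternion.star_eq_two_re_sub w, sub_mul, sub_mul, Quaternion.coe_mul_eq_smul,
    Quaternion.coe_mul_eq_smul]
  abel

theorem quaternion_star_mul_mul_mul (q c d : ℍ[R]) :
    star (q * c) * (q * d) = Quaternion.normSq q • (star c * d) := by
  rw [star_mul, mul_assoc, ← mul_assoc (star q), Quaternion.star_mul_self,
    Quaternion.coe_mul_eq_smul, mul_smul_comm]

theorem quaternion_normSq_smul_im_mul_star_sub (q a b : ℍ[R]) :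
    Quaternion.normSq q • (a * star b - b * star a).im
      = (2 * (q * star a).re) • (q * star b).im - (2 * (q * star b).re) • (q * star a).im
        - ⁅(q * star a).im, (q * star b).im⁆ := by
  have im_eq_self : (a * star b - b * star a).im = a * star b - b * star a := by
    simpa only [star_mul, star_star] using quaternion_im_sub_star_self (a * star b)
  rw [im_eq_self, smul_sub, ← quaternion_star_mul_sub_star_mul, quaternion_star_mul_mul_mul,
    quaternion_star_mul_mul_mul, star_star, star_star]

end QuaternionAlgebraIdentities

section InverseOneAddNormSq

variable {E F : Type*} [NormedAddCommGroup E] [InnerProductSpace ℝ E]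
  [NormedAddCommGroup F] [NormedSpace ℝ F]

theorem hasFDerivAt_inv_one_add_norm_sq (x : E) :
    HasFDerivAt (fun y : E ↦ (1 + ‖y‖ ^ 2)⁻¹)
      (-(((1 + ‖x‖ ^ 2)⁻¹) ^ 2 * 2) • innerSL ℝ x) x := by
  have one_add_norm_sq_ne_zero : 1 + ‖x‖ ^ 2 ≠ 0 := by positivity
  have hasFDerivAt_one_add_norm_sq :=
    (hasStrictFDerivAt_norm_sq x).hasFDerivAt.const_add 1
  refine ((hasDerivAt_inv one_add_norm_sq_ne_zero).comp_hasFDerivAt x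
    hasFDerivAt_one_add_norm_sq).congr_fderiv ?_
  ext v
  simp [mul_assoc]

theorem fderiv_inv_one_add_norm_sq_smul_apply (L : E →L[ℝ] F) (x v : E) :
    fderiv ℝ (fun y ↦ (1 + ‖y‖ ^ 2)⁻¹ • L y) x v
      = (1 + ‖x‖ ^ 2)⁻¹ • L v - (((1 + ‖x‖ ^ 2)⁻¹) ^ 2 * (2 * inner ℝ x v)) • L x := by
  rw [((hasFDerivAt_inv_one_add_norm_sq x).fun_smul L.hasFDerivAt).fderiv]
  simp [sub_eq_add_neg, mul_assoc]

end InverseOneAddNormSq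

/-- The real-linear map `q ↦ im (q * star v)`, the numerator of the basic instanton contracted
with the vector `v`; bundled as a continuous linear map so that it can be differentiated. -/
noncomputable def imMulStarCLM (v : ℍ[ℝ]) : ℍ[ℝ] →L[ℝ] ℍ[ℝ] where
  toFun q := (q * star v).im
  map_add' p q := by rw [add_mul, Quaternion.im_add]
  map_smul' c q := by rw [smul_mul_assoc, Quaternion.im_smul, RingHom.id_apply]
  cont := Quaternion.continuous_im.comp (continuous_mul_const (star v))

/-- The basic instanton as a coordinate-free connection one-form: its value at the point `q` on an
arbitrary tangent vector `v`. The vector comes first, so that `instantonForm v` is the component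
function in the direction `v`. -/
noncomputable def instantonForm (v q : ℍ[ℝ]) : ℍ[ℝ] :=
  (1 + ‖q‖ ^ 2)⁻¹ • (q * star v).im

theorem fderiv_instantonForm_apply (v q h : ℍ[ℝ]) :
    fderiv ℝ (instantonForm v) q h
      = (1 + ‖q‖ ^ 2)⁻¹ • (h * star v).im
        - (((1 + ‖q‖ ^ 2)⁻¹) ^ 2 * (2 * (q * star h).re)) • (q * star v).im :=
  fderiv_inv_one_add_norm_sq_smul_apply (imMulStarCLM v) q h

theorem lie_instantonForm (a b q : ℍ[ℝ]) :
    ⁅instantonForm a q, instantonForm b q⁆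
      = ((1 + ‖q‖ ^ 2)⁻¹) ^ 2 • ⁅(q * star a).im, (q * star b).im⁆ := by
  simp only [instantonForm, Ring.lie_def, smul_mul_smul_comm, ← smul_sub, sq]

theorem basicInstanton_curvature_general (a b q : ℍ[ℝ]) :
    fderiv ℝ (instantonForm b) q a - fderiv ℝ (instantonForm a) q b
        + ⁅instantonForm a q, instantonForm b q⁆
      = ((1 + ‖q‖ ^ 2)⁻¹) ^ 2 • (a * star b - b * star a).im := by
  have norm_sq_smul := quaternion_normSq_smul_im_mul_star_sub q a b
  rw [Quaternion.normSq_eq_norm_mul_self, ← sq, Quaternion.im_sub] at norm_sq_smul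
  rw [fderiv_instantonForm_apply, fderiv_instantonForm_apply, lie_instantonForm, Quaternion.im_sub]
  have inv_eq : (1 + ‖q‖ ^ 2)⁻¹ = ((1 + ‖q‖ ^ 2)⁻¹) ^ 2 * (1 + ‖q‖ ^ 2) := by
    field_simp
  linear_combination (norm := module) inv_eq • ((a * star b).im - (b * star a).im)
    + ((1 + ‖q‖ ^ 2)⁻¹) ^ 2 • norm_sq_smul

theorem qIm_eq_im (p : ℍ[ℝ]) : qIm p = p.im := by
  have quaternion_two_ne_zero : (2 : ℍ[ℝ]) ≠ 0 :=
    fun h ↦ two_ne_zero (congrArg QuaternionAlgebra.re h)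
  rw [qIm, div_eq_iff quaternion_two_ne_zero, mul_two]
  ext <;> simp

theorem basicInstanton_eq_instantonForm (μ : Fin 4) :
    basicInstanton μ = instantonForm (qe μ) := by
  funext q
  rw [basicInstanton, instantonForm, qIm_eq_im]

/-- The curvature of the basic instanton is `F = (1/(1+|q|²))² · Im(dq ∧ dconj q)`; in
components, `F_{μν}(q) = (1/(1+|q|²))² · Im(e_μ·conj(e_ν) − e_ν·conj(e_μ))`. -/
theorem basicInstanton_curvature (μ ν : Fin 4) (q : Quaternion ℝ) :
    qCurv basicInstanton μ ν q
      = ((1 + ‖q‖ ^ 2)⁻¹) ^ 2 • qIm (qe μ * star (qe ν) - qe ν * star (qe μ)) := by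
  rw [qCurv, basicInstanton_eq_instantonForm, basicInstanton_eq_instantonForm, ← Ring.lie_def,
    basicInstanton_curvature_general, qIm_eq_im]
end

section
/- Dimensional reduction to Hitchin's equations: let A₁, A₂, A₃, A₄ : ℝ² → u(n) be differentiable, regarded as an (x₃,x₄)-invariant connection on ℝ⁴, and set Φ := ½(A₃ + i·A₄) : ℝ² → Mₙ(ℂ). Then the anti-self-duality equations F₁₂ = F₃₄, F₁₃ = −F₂₄, F₁₄ = F₂₃ hold if and only if Hitchin's equations hold on ℝ²: F₁₂ = −2i·[Φ, Φ†] and (∂₁ − i·∂₂)Φ + [A₁ − i·A₂, Φ] = 0, where F₁₂ = ∂₁A₂ − ∂₂A₁ + [A₁, A₂] and † denotes the conjugate transpose. -/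
open Matrix

attribute [local instance] Matrix.frobeniusNormedAddCommGroup Matrix.frobeniusNormedSpace

/-- The standard basis vectors of `ℝ⁴`. -/
noncomputable def e4 (i : Fin 4) : EuclideanSpace ℝ (Fin 4) := EuclideanSpace.single i 1

/-- The curvature components `F_{ij} = ∂ᵢA_j − ∂_jA_i + [A_i, A_j]` of a matrix-valued
connection `A` on `ℝ⁴`. -/
noncomputable def curv {n : ℕ} (A : Fin 4 → EuclideanSpace ℝ (Fin 4) → Matrix (Fin n) (Fin n) ℂ)
    (i j : Fin 4) (x : EuclideanSpace ℝ (Fin 4)) : Matrix (Fin n) (Fin n) ℂ :=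
  fderiv ℝ (A j) x (e4 i) - fderiv ℝ (A i) x (e4 j) + (A i x * A j x - A j x * A i x)

/-- A connection on `ℝ⁴` is anti-self-dual if `F₁₂ = F₃₄`, `F₁₃ = −F₂₄`, `F₁₄ = F₂₃`
at every point. -/
def IsASD {n : ℕ} (A : Fin 4 → EuclideanSpace ℝ (Fin 4) → Matrix (Fin n) (Fin n) ℂ) : Prop :=
  ∀ x, curv A 0 1 x = curv A 2 3 x
    ∧ curv A 0 2 x = -curv A 1 3 x
    ∧ curv A 0 3 x = curv A 1 2 x

/-- The standard basis vectors of `ℝ²`. -/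
noncomputable def e2 (i : Fin 2) : EuclideanSpace ℝ (Fin 2) := EuclideanSpace.single i 1

/-- Projection `ℝ⁴ → ℝ²` onto the first two coordinates. -/
noncomputable def proj42 (x : EuclideanSpace ℝ (Fin 4)) : EuclideanSpace ℝ (Fin 2) :=
  WithLp.toLp 2 fun i => x (Fin.castLE (by norm_num) i)

/-- The `(x₃,x₄)`-invariant connection on `ℝ⁴` determined by components
`A₁,A₂,A₃,A₄` defined on `ℝ²`. -/
noncomputable def extend24 {n : ℕ}
    (A : Fin 4 → EuclideanSpace ℝ (Fin 2) → Matrix (Fin n) (Fin n) ℂ) :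
    Fin 4 → EuclideanSpace ℝ (Fin 4) → Matrix (Fin n) (Fin n) ℂ :=
  fun μ x => A μ (proj42 x)

/-- The Higgs field `Φ = ½(A₃ + i·A₄)` of the reduction to two dimensions. -/
noncomputable def higgsΦ {n : ℕ}
    (A : Fin 4 → EuclideanSpace ℝ (Fin 2) → Matrix (Fin n) (Fin n) ℂ)
    (x : EuclideanSpace ℝ (Fin 2)) : Matrix (Fin n) (Fin n) ℂ :=
  (1 / 2 : ℂ) • (A 2 x + Complex.I • A 3 x)

/-!
Invariance kills the derivatives along `x₃` and `x₄`, so the mixed curvature components of the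
connection become covariant derivatives `∇ᵢA_j` of the Higgs components and `F₃₄ = [A₃, A₄]`.
Since `A₃` and `A₄` are skew-Hermitian, `Φ† = ½(-A₃ + iA₄)`, whence `-2i[Φ, Φ†] = [A₃, A₄]`.
Moreover `(∇₁ - i∇₂)Φ = ½((∇₁A₃ + ∇₂A₄) + i(∇₁A₄ - ∇₂A₃))`, and as covariant derivatives
of skew-Hermitian fields are skew-Hermitian, this vanishes iff both parentheses do.
-/

attribute [local instance] LieRing.ofAssociativeRing

theorem lie_mem_skewAdjoint {R : Type*} [Ring R] [StarRing R] {a b : R}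
    (ha : a ∈ skewAdjoint R) (hb : b ∈ skewAdjoint R) : ⁅a, b⁆ ∈ skewAdjoint R := by
  rw [skewAdjoint.mem_iff] at ha hb ⊢
  simp [Ring.lie_def, ha, hb]

theorem add_I_smul_eq_zero_iff {M : Type*} [AddCommGroup M] [Module ℂ M] [StarAddMonoid M]
    [StarModule ℂ M] {x y : M} (hx : x ∈ skewAdjoint M) (hy : y ∈ skewAdjoint M) :
    x + Complex.I • y = 0 ↔ x = 0 ∧ y = 0 := by
  refine ⟨fun h => ?_, fun ⟨hx₀, hy₀⟩ => by simp [hx₀, hy₀]⟩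
  have hstar : -x + Complex.I • y = 0 := by
    simpa [skewAdjoint.mem_iff.mp hx, skewAdjoint.mem_iff.mp hy] using congrArg star h
  have hx₀ : x = 0 := by
    linear_combination (norm := module) (1 / 2 : ℂ) • h - (1 / 2 : ℂ) • hstar
  exact ⟨hx₀, by simpa [hx₀] using h⟩

theorem lie_eq_smul_lie_star {R : Type*} [Ring R] [Algebra ℂ R] [StarRing R] [StarModule ℂ R]
    {a b : R} (ha : a ∈ skewAdjoint R) (hb : b ∈ skewAdjoint R) :
    ⁅a, b⁆ = (-(2 * Complex.I)) • ⁅(1 / 2 : ℂ) • (a + Complex.I • b),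
      star ((1 / 2 : ℂ) • (a + Complex.I • b))⁆ := by
  have hstar : star ((1 / 2 : ℂ) • (a + Complex.I • b)) = (1 / 2 : ℂ) • (-a + Complex.I • b) := by
    simp [skewAdjoint.mem_iff.mp ha, skewAdjoint.mem_iff.mp hb]
  have hlie : ⁅a + Complex.I • b, -a + Complex.I • b⁆ = (2 * Complex.I) • ⁅a, b⁆ := by
    simp only [add_lie, lie_add, lie_neg, smul_lie, lie_smul, lie_self, ← lie_skew a b]
    module
  rw [hstar, smul_lie, lie_smul, hlie]
  match_scalars
  linear_combination Complex.I_mul_I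

theorem fderiv_mem_skewAdjoint {E F : Type*} [NormedAddCommGroup E] [NormedSpace ℝ E]
    [NormedAddCommGroup F] [NormedSpace ℝ F] [StarAddMonoid F] [StarModule ℝ F] [ContinuousStar F]
    {f : E → F} (hf : ∀ x, f x ∈ skewAdjoint F) (x v : E) :
    fderiv ℝ f x v ∈ skewAdjoint F := by
  have hstar : (fun y => star (f y)) = -f := funext fun y => skewAdjoint.mem_iff.mp (hf y)
  have hderiv := congrArg (fderiv ℝ · x v) hstar
  simpa [skewAdjoint.mem_iff, fderiv_neg] using hderiv

/-- The covariant derivative `∇ᵥφ = ∂ᵥφ + a · φ` at `x`, where `a` is the component along `v` of a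
connection with values in a Lie ring acting on the values of `φ`. For matrix-valued `a` and `φ`
the action is the commutator. -/
noncomputable def covDeriv {E L F : Type*} [AddCommGroup E] [Module ℝ E] [TopologicalSpace E]
    [LieRing L] [AddCommGroup F] [Module ℝ F] [TopologicalSpace F] [LieRingModule L F]
    (a : E → L) (φ : E → F) (v x : E) : F :=
  fderiv ℝ φ x v + ⁅a x, φ x⁆

theorem covDeriv_sub_I_smul_covDeriv {E R : Type*} [AddCommGroup E] [Module ℝ E]
    [TopologicalSpace E] [Ring R] [Algebra ℂ R] [Module ℝ R] [TopologicalSpace R]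
    (a b φ : E → R) (v w x : E) :
    covDeriv a φ v x - Complex.I • covDeriv b φ w x
      = fderiv ℝ φ x v - Complex.I • fderiv ℝ φ x w + ⁅a x - Complex.I • b x, φ x⁆ := by
  rw [covDeriv, covDeriv, sub_lie, smul_lie]
  module

theorem covDeriv_mem_skewAdjoint {E ι : Type*} [NormedAddCommGroup E] [NormedSpace ℝ E]
    [Fintype ι] [DecidableEq ι] {a φ : E → Matrix ι ι ℂ} {v x : E}
    (ha : a x ∈ skewAdjoint (Matrix ι ι ℂ)) (hφ : ∀ y, φ y ∈ skewAdjoint (Matrix ι ι ℂ)) :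
    covDeriv a φ v x ∈ skewAdjoint (Matrix ι ι ℂ) :=
  add_mem (fderiv_mem_skewAdjoint hφ x v) (lie_mem_skewAdjoint ha (hφ x))

section Reduction

/-- `proj42` as a continuous linear map. -/
noncomputable def proj42CLM : EuclideanSpace ℝ (Fin 4) →L[ℝ] EuclideanSpace ℝ (Fin 2) :=
  LinearMap.toContinuousLinearMap
    { toFun := proj42
      map_add' := fun _ _ => rfl
      map_smul' := fun _ _ => rfl }

theorem proj42_surjective : Function.Surjective proj42 := fun x =>
  ⟨WithLp.toLp 2 ![x 0, x 1, 0, 0], by ext i; fin_cases i <;> rfl⟩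

theorem proj42_e4_castAdd (i : Fin 2) : proj42 (e4 (Fin.castAdd 2 i)) = e2 i := by
  ext j; fin_cases i <;> fin_cases j <;> simp [proj42, e4, e2]

theorem proj42_e4_natAdd (i : Fin 2) : proj42 (e4 (Fin.natAdd 2 i)) = 0 := by
  ext j; fin_cases i <;> fin_cases j <;> simp [proj42, e4]

variable {n : ℕ} {A : Fin 4 → EuclideanSpace ℝ (Fin 2) → Matrix (Fin n) (Fin n) ℂ}

theorem fderiv_extend24 {μ : Fin 4} {x : EuclideanSpace ℝ (Fin 4)}
    (hA : DifferentiableAt ℝ (A μ) (proj42 x)) (v : EuclideanSpace ℝ (Fin 4)) :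
    fderiv ℝ (extend24 A μ) x v = fderiv ℝ (A μ) (proj42 x) (proj42 v) :=
  congrArg (· v) (hA.hasFDerivAt.comp x proj42CLM.hasFDerivAt).fderiv

theorem curv_extend24_castAdd_castAdd (hdiff : ∀ μ, Differentiable ℝ (A μ)) (i j : Fin 2)
    (x : EuclideanSpace ℝ (Fin 4)) :
    curv (extend24 A) (Fin.castAdd 2 i) (Fin.castAdd 2 j) x =
      fderiv ℝ (A (Fin.castAdd 2 j)) (proj42 x) (e2 i)
        - fderiv ℝ (A (Fin.castAdd 2 i)) (proj42 x) (e2 j)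
        + ⁅A (Fin.castAdd 2 i) (proj42 x), A (Fin.castAdd 2 j) (proj42 x)⁆ := by
  rw [curv, fderiv_extend24 (hdiff _ _), fderiv_extend24 (hdiff _ _), proj42_e4_castAdd,
    proj42_e4_castAdd]
  rfl

theorem curv_extend24_castAdd_natAdd (hdiff : ∀ μ, Differentiable ℝ (A μ)) (i j : Fin 2)
    (x : EuclideanSpace ℝ (Fin 4)) :
    curv (extend24 A) (Fin.castAdd 2 i) (Fin.natAdd 2 j) x =
      covDeriv (A (Fin.castAdd 2 i)) (A (Fin.natAdd 2 j)) (e2 i) (proj42 x) := by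
  rw [curv, fderiv_extend24 (hdiff _ _), fderiv_extend24 (hdiff _ _), proj42_e4_castAdd,
    proj42_e4_natAdd, map_zero, sub_zero]
  rfl

theorem curv_extend24_natAdd_natAdd (hdiff : ∀ μ, Differentiable ℝ (A μ)) (i j : Fin 2)
    (x : EuclideanSpace ℝ (Fin 4)) :
    curv (extend24 A) (Fin.natAdd 2 i) (Fin.natAdd 2 j) x =
      ⁅A (Fin.natAdd 2 i) (proj42 x), A (Fin.natAdd 2 j) (proj42 x)⁆ := by
  rw [curv, fderiv_extend24 (hdiff _ _), fderiv_extend24 (hdiff _ _), proj42_e4_natAdd,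
    proj42_e4_natAdd, map_zero, map_zero, sub_zero, zero_add]
  rfl

theorem isASD_extend24_iff (hdiff : ∀ μ, Differentiable ℝ (A μ)) :
    IsASD (extend24 A) ↔ ∀ x,
      fderiv ℝ (A 1) x (e2 0) - fderiv ℝ (A 0) x (e2 1) + ⁅A 0 x, A 1 x⁆ = ⁅A 2 x, A 3 x⁆
      ∧ covDeriv (A 0) (A 2) (e2 0) x = -covDeriv (A 1) (A 3) (e2 1) x
      ∧ covDeriv (A 0) (A 3) (e2 0) x = covDeriv (A 1) (A 2) (e2 1) x := by
  rw [proj42_surjective.forall]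
  refine forall_congr' fun x => ?_
  have h₁₂ := curv_extend24_castAdd_castAdd hdiff 0 1 x
  have h₃₄ := curv_extend24_natAdd_natAdd hdiff 0 1 x
  have hmixed := curv_extend24_castAdd_natAdd hdiff (x := x)
  exact and_congr (h₁₂.congr h₃₄) (and_congr
    ((hmixed 0 0).congr (congrArg Neg.neg (hmixed 1 1))) ((hmixed 0 1).congr (hmixed 1 0)))

end Reduction

section Higgs

variable {n : ℕ} {A : Fin 4 → EuclideanSpace ℝ (Fin 2) → Matrix (Fin n) (Fin n) ℂ}
  {x : EuclideanSpace ℝ (Fin 2)}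

theorem lie_eq_smul_lie_higgsΦ_conjTranspose
    (h₂ : A 2 x ∈ skewAdjoint (Matrix (Fin n) (Fin n) ℂ))
    (h₃ : A 3 x ∈ skewAdjoint (Matrix (Fin n) (Fin n) ℂ)) :
    ⁅A 2 x, A 3 x⁆ = (-(2 * Complex.I)) • ⁅higgsΦ A x, (higgsΦ A x)ᴴ⁆ :=
  lie_eq_smul_lie_star h₂ h₃

theorem covDeriv_higgsΦ (h₂ : DifferentiableAt ℝ (A 2) x) (h₃ : DifferentiableAt ℝ (A 3) x)
    (a : EuclideanSpace ℝ (Fin 2) → Matrix (Fin n) (Fin n) ℂ) (v : EuclideanSpace ℝ (Fin 2)) :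
    covDeriv a (higgsΦ A) v x
      = (1 / 2 : ℂ) • (covDeriv a (A 2) v x + Complex.I • covDeriv a (A 3) v x) := by
  have hderiv : fderiv ℝ (higgsΦ A) x v
      = (1 / 2 : ℂ) • (fderiv ℝ (A 2) x v + Complex.I • fderiv ℝ (A 3) x v) :=
    congrArg (· v) ((h₂.hasFDerivAt.add (h₃.hasFDerivAt.const_smul Complex.I)).const_smul
      (1 / 2 : ℂ)).fderiv
  simp only [covDeriv, hderiv, higgsΦ, lie_smul, lie_add]
  module

theorem covDeriv_sub_I_smul_covDeriv_higgsΦ (h₂ : DifferentiableAt ℝ (A 2) x)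
    (h₃ : DifferentiableAt ℝ (A 3) x) (a b : EuclideanSpace ℝ (Fin 2) → Matrix (Fin n) (Fin n) ℂ)
    (v w : EuclideanSpace ℝ (Fin 2)) :
    covDeriv a (higgsΦ A) v x - Complex.I • covDeriv b (higgsΦ A) w x
      = (1 / 2 : ℂ) • ((covDeriv a (A 2) v x + covDeriv b (A 3) w x)
        + Complex.I • (covDeriv a (A 3) v x - covDeriv b (A 2) w x)) := by
  rw [covDeriv_higgsΦ h₂ h₃, covDeriv_higgsΦ h₂ h₃]
  linear_combination (norm := module) (-(1 / 2 : ℂ)) • Complex.I_mul_I • covDeriv b (A 3) w x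

end Higgs

/-- Dimensional reduction to Hitchin's equations: an `(x₃,x₄)`-invariant `u(n)`-connection on
`ℝ⁴` is anti-self-dual iff Hitchin's equations `F₁₂ = −2i·[Φ,Φ†]` and
`(∂₁ − i∂₂)Φ + [A₁ − iA₂, Φ] = 0` hold on `ℝ²`, where `Φ = ½(A₃ + iA₄)`. -/
theorem asd_iff_hitchin {n : ℕ}
    (A : Fin 4 → EuclideanSpace ℝ (Fin 2) → Matrix (Fin n) (Fin n) ℂ)
    (hdiff : ∀ μ, Differentiable ℝ (A μ))
    (hskew : ∀ μ x, (A μ x)ᴴ = -(A μ x)) :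
    IsASD (extend24 A) ↔
      ∀ x : EuclideanSpace ℝ (Fin 2),
        (fderiv ℝ (A 1) x (e2 0) - fderiv ℝ (A 0) x (e2 1)
            + (A 0 x * A 1 x - A 1 x * A 0 x)
          = (-(2 * Complex.I)) •
              (higgsΦ A x * (higgsΦ A x)ᴴ - (higgsΦ A x)ᴴ * higgsΦ A x))
        ∧ (fderiv ℝ (higgsΦ A) x (e2 0) - Complex.I • fderiv ℝ (higgsΦ A) x (e2 1)
            + ((A 0 x - Complex.I • A 1 x) * higgsΦ A x
              - higgsΦ A x * (A 0 x - Complex.I • A 1 x)) = 0) := by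
  rw [isASD_extend24_iff hdiff]
  refine forall_congr' fun x => and_congr ?_ ?_
  · rw [lie_eq_smul_lie_higgsΦ_conjTranspose (hskew 2 x) (hskew 3 x), Ring.lie_def, Ring.lie_def]
  · have hcov (i : Fin 2) (μ ν : Fin 4) :
        covDeriv (A μ) (A ν) (e2 i) x ∈ skewAdjoint (Matrix (Fin n) (Fin n) ℂ) :=
      covDeriv_mem_skewAdjoint (hskew μ x) (hskew ν)
    rw [← Ring.lie_def, ← covDeriv_sub_I_smul_covDeriv,
      covDeriv_sub_I_smul_covDeriv_higgsΦ (hdiff 2 x) (hdiff 3 x),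
      smul_eq_zero_iff_right (by norm_num),
      add_I_smul_eq_zero_iff (add_mem (hcov 0 0 2) (hcov 1 1 3))
        (sub_mem (hcov 0 0 3) (hcov 1 1 2)),
      ← eq_neg_iff_add_eq_zero, sub_eq_zero]
end
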